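/- Let G be a group, f a nonzero homogeneous quasimorphism on G, and let G⁺ be the order semigroup of a bi-invariant partial order on G sandwiched by f. Then the dominant set of G⁺ equals {g ∈ G⁺ | f(g) > 0}. -/

import Mathlib

/-- Let `f` be a nonzero homogeneous quasimorphism on a group `G` and `G⁺`
the order semigroup of a bi-invariant partial order sandwiched by `f`.
Then the dominant set of `G⁺` equals `{g ∈ G⁺ | f(g) > 0}`. -/
theorem dominants_eq_positive_part {G : Type*} [Group G] (f : G → ℝ)
    (hD : ∃ D : ℝ, ∀ g h : G, |f (g * h) - f g - f h| ≤ D)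
    (hhom : ∀ (g : G) (n : ℤ), f (g ^ n) = n * f g)
    (hf0 : f ≠ 0)
    (P : Set G)
    (hone : (1 : G) ∈ P)
    (hmul : ∀ a ∈ P, ∀ b ∈ P, a * b ∈ P)
    (hconj : ∀ g : G, ∀ a ∈ P, g * a * g⁻¹ ∈ P)
    (hpointed : ∀ a ∈ P, a⁻¹ ∈ P → a = 1)
    (hsandwich : ∃ C₁ C₂ : ℝ, {g : G | C₁ ≤ f g} ⊆ P ∧ P ⊆ {g : G | C₂ ≤ f g}) :
    {h : G | h ∈ P ∧ h ≠ 1 ∧ ∀ g : G, ∃ n : ℕ, h ^ n * g⁻¹ ∈ P}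
      = {g : G | g ∈ P ∧ 0 < f g} := by
  obtain ⟨D, hD⟩ := hD
  obtain ⟨C₁, C₂, h1, h2⟩ := hsandwich
  have hnat : ∀ (g : G) (n : ℕ), f (g ^ n) = n * f g := by
    intro g n
    have := hhom g n
    simpa using this
  have hinv : ∀ g : G, f g⁻¹ = - f g := by
    intro g
    have := hhom g (-1)
    simpa using this
  have hf1 : f 1 = 0 := by
    have := hnat 1 0
    simpa using this
  ext h
  simp only [Set.mem_setOf_eq]
  constructor
  · rintro ⟨hP, -, hdom⟩
    refine ⟨hP, ?_⟩
    by_contra hneg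
    have hneg' : f h ≤ 0 := not_lt.mp hneg
    obtain ⟨y, hy⟩ : ∃ y, 0 < f y := by
      obtain ⟨x, hx⟩ := Function.ne_iff.mp hf0
      rcases lt_or_gt_of_ne hx with hx | hx
      · refine ⟨x⁻¹, ?_⟩
        rw [hinv]
        simpa using hx
      · exact ⟨x, hx⟩
    obtain ⟨m, hm⟩ := exists_nat_gt ((D - C₂) / f y)
    rw [div_lt_iff₀ hy] at hm
    obtain ⟨n, hn⟩ := hdom (y ^ m)
    have hb : C₂ ≤ f (h ^ n * (y ^ m)⁻¹) := h2 hn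
    have hq := (abs_le.mp (hD (h ^ n) (y ^ m)⁻¹)).2
    rw [hinv, hnat, hnat] at hq
    have : (n : ℝ) * f h ≤ 0 := mul_nonpos_of_nonneg_of_nonpos n.cast_nonneg hneg'
    linarith
  · rintro ⟨hP, hpos⟩
    refine ⟨hP, ?_, fun g => ?_⟩
    · rintro rfl
      linarith
    · obtain ⟨n, hn⟩ := exists_nat_gt ((C₁ + f g + D) / f h)
      rw [div_lt_iff₀ hpos] at hn
      refine ⟨n, h1 ?_⟩
      have hq := (abs_le.mp (hD (h ^ n) g⁻¹)).1
      rw [hinv, hnat] at hq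
      show C₁ ≤ f (h ^ n * g⁻¹)
      linarith
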